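/- arXiv:2209.01003 — 2 statements merged into one kernel-verified Lean document; each statement's English description precedes it below -/
import Mathlib

section
/- Let d ≥ 2 and let u : ℤ^d → [0,∞) be admissible. Then u and its Schwarz rearrangement u* = R_{ℤ^d} u are equimeasurable, i.e. |{x : u(x) > t}| = |{x : u*(x) > t}| for every t > 0. -/
open Filter Topology

noncomputable section

abbrev ZLat (d : ℕ) := Fin d → ℤ

def stdVec (d : ℕ) (i : Fin d) : Fin d → ℝ := fun j => if j = i then 1 else 0

/-- The set of directions E⃗ ⊆ ℝ^d. -/
def Evec (d : ℕ) : Set (Fin d → ℝ) :=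
  {e | (∃ i, e = stdVec d i) ∨
    (∃ i j : Fin d, i < j ∧ e = fun k => (stdVec d i k + stdVec d j k) / 2) ∨
    (∃ i j : Fin d, i < j ∧ e = fun k => (stdVec d i k - stdVec d j k) / 2)}

/-- A fixed enumeration of E⃗ (for d = 2 it is e₁, e₂, (e₁+e₂)/2, (e₁-e₂)/2). -/
def EvecList (d : ℕ) : List (Fin d → ℝ) :=
  ((List.finRange d).map (stdVec d)) ++
  ((List.finRange d).flatMap fun i => (List.finRange d).filterMap fun j =>
    if i < j then some (fun k => (stdVec d i k + stdVec d j k) / 2) else none) ++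
  ((List.finRange d).flatMap fun i => (List.finRange d).filterMap fun j =>
    if i < j then some (fun k => (stdVec d i k - stdVec d j k) / 2) else none)

/-- The n-th largest value of `u`, counted with multiplicity (1-indexed). -/
def nthLargest {α : Type*} (u : α → NNReal) (n : ℕ) : NNReal :=
  sSup {t | ∃ Ω : Finset α, Ω.card = n ∧ ∀ x ∈ Ω, t ≤ u x}

/-- The 1-indexed position of the point with doubled coordinate `m` in the
spiral order 0, 1, −1, 2, −2, … (for even m) resp. 1/2, −1/2, 3/2, −3/2, … (for odd m). -/
def posIdx (m : ℤ) : ℕ := (if 0 < m then m else 1 - m).toNat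

/-- `x` and `y` lie on a common line with direction `e`. -/
def sameLine {d : ℕ} (e : Fin d → ℝ) (x y : ZLat d) : Prop :=
  ∃ c : ℝ, (fun i => (x i : ℝ) - (y i : ℝ)) = c • e

/-- Twice the inner product ⟨e, x⟩, as an integer. -/
def pairing {d : ℕ} (e : Fin d → ℝ) (x : ZLat d) : ℤ :=
  ⌊2 * ∑ i, e i * (x i : ℝ)⌋

/-- One-step rearrangement `R_e`. -/
def stepR {d : ℕ} (e : Fin d → ℝ) (u : ZLat d → NNReal) : ZLat d → NNReal :=
  fun x => nthLargest (fun y : {y : ZLat d // sameLine e x y} => u y.1) (posIdx (pairing e x))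

/-- `R^k u` : k successive one-step rearrangements cycling through the fixed enumeration. -/
def iterR (d : ℕ) (u : ZLat d → NNReal) : ℕ → ZLat d → NNReal
  | 0 => u
  | k + 1 => stepR ((EvecList d).getD (k % (EvecList d).length) 0) (iterR d u k)

/-- The Schwarz rearrangement on ℤ^d : pointwise limit of `R^k u`. -/
def RZd (d : ℕ) (u : ZLat d → NNReal) : ZLat d → NNReal :=
  fun x => limUnder atTop fun k => iterR d u k x

def Admissible {α : Type*} (u : α → NNReal) : Prop :=
  ∀ t : NNReal, 0 < t → {x | t < u x}.Finite

def Equimeasurable {α : Type*} (u v : α → NNReal) : Prop :=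
  ∀ t : NNReal, 0 < t → Nonempty ({x | t < u x} ≃ {x | t < v x})

/-- Graph distance (ℓ¹ distance) on the lattice ℤ^d. -/
def latDist {d : ℕ} (x y : ZLat d) : ℕ := ∑ i, (x i - y i).natAbs

/-- The i-th standard basis vector of ℤ^d. -/
def latE {d : ℕ} (i : Fin d) : ZLat d := fun j => if j = i then 1 else 0

/-- ‖∇u‖_p^p : the p-Sobolev energy, summing over each edge {x, x+e_i} once. -/
def gradEnergy (d : ℕ) (p : ℝ) (u : ZLat d → NNReal) : ENNReal :=
  ∑' (x : ZLat d) (i : Fin d), ENNReal.ofReal (|(u (x + latE i) : ℝ) - (u x : ℝ)| ^ p)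

/-- ‖∇u‖_p. -/
def gradNorm (d : ℕ) (p : ℝ) (u : ZLat d → NNReal) : ENNReal :=
  gradEnergy d p u ^ (1 / p)

/-- Graph automorphism of the lattice graph ℤ^d. -/
def IsLatAuto {d : ℕ} (σ : ZLat d ≃ ZLat d) : Prop :=
  ∀ x y : ZLat d, latDist (σ x) (σ y) = 1 ↔ latDist x y = 1

def Supermodular (G : NNReal → NNReal → NNReal) : Prop :=
  ∀ s t s₀ t₀ : NNReal, G (s + s₀) t + G s (t + t₀) ≤ G (s + s₀) (t + t₀) + G s t

def StrictlySupermodular (G : NNReal → NNReal → NNReal) : Prop :=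
  ∀ s t s₀ t₀ : NNReal, 0 < s₀ → 0 < t₀ →
    G (s + s₀) t + G s (t + t₀) < G (s + s₀) (t + t₀) + G s t

/-- The values of `u` are strictly decreasing: a₁ > a₂ > a₃ > ⋯ . -/
def StrictRan {α : Type*} (u : α → NNReal) : Prop :=
  ∀ n : ℕ, 0 < n → nthLargest u (n + 1) < nthLargest u n


/-! ### Abstract rearrangement of finite sets -/

open Classical in
/-- Rank of `x` in its class within `A`. -/
def rk6 {α : Type*} (r : α → α → Prop) (pos : α → ℕ) (A : Finset α) (x : α) : ℕ :=
  (A.filter (fun y => r x y ∧ pos y ≤ pos x)).card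

open Classical in
theorem rearr6 {α : Type*} (r : α → α → Prop) (hr : Equivalence r) (pos : α → ℕ)
    (hpos : ∀ x, 1 ≤ pos x)
    (hinj : ∀ x y, r x y → pos x = pos y → x = y)
    (hsurj : ∀ x n, 1 ≤ n → ∃ y, r x y ∧ pos y = n) (P : α → ℕ)
    (hP : ∀ x y, r x y → pos x < pos y → P x < P y) (A : Finset α) :
    ∃ B : Finset α, (∀ x, x ∈ B ↔ pos x ≤ (A.filter (r x)).card) ∧ B.card = A.card ∧
      ∑ x ∈ B, P x ≤ ∑ x ∈ A, P x ∧ (∑ x ∈ B, P x = ∑ x ∈ A, P x → B = A) := by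
  have hrk1 : ∀ x ∈ A, 1 ≤ rk6 r pos A x := by
    intro x hx
    refine Finset.card_pos.2 ⟨x, ?_⟩
    simp [hx, hr.refl x]
  have hrkpos : ∀ x, rk6 r pos A x ≤ pos x := by
    intro x
    have : rk6 r pos A x ≤ (Finset.Icc 1 (pos x)).card := by
      refine Finset.card_le_card_of_injOn pos ?_ ?_
      · intro y hy
        have hy' := Finset.mem_filter.1 hy
        exact Finset.mem_coe.2 (Finset.mem_Icc.2 ⟨hpos y, hy'.2.2⟩)
      · intro y hy z hz h
        have hy' := Finset.mem_filter.1 hy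
        have hz' := Finset.mem_filter.1 hz
        exact hinj y z (hr.trans (hr.symm hy'.2.1) hz'.2.1) h
    simpa using this
  have hrklt : ∀ x y, y ∈ A → r x y → pos x < pos y → rk6 r pos A x < rk6 r pos A y := by
    intro x y hy hxy hlt
    refine Finset.card_lt_card ⟨?_, ?_⟩
    · intro z hz
      have hz' := Finset.mem_filter.1 hz
      exact Finset.mem_filter.2 ⟨hz'.1, hr.trans (hr.symm hxy) hz'.2.1, by omega⟩
    · intro h
      have := h (Finset.mem_filter.2 ⟨hy, hr.refl y, le_refl _⟩)
      have := (Finset.mem_filter.1 this).2.2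
      omega
  have hrkinj : ∀ x ∈ A, ∀ y ∈ A, r x y → rk6 r pos A x = rk6 r pos A y → x = y := by
    intro x hx y hy hxy h
    rcases lt_trichotomy (pos x) (pos y) with h1 | h1 | h1
    · have := hrklt x y hy hxy h1; omega
    · exact hinj x y hxy h1
    · have := hrklt y x hx (hr.symm hxy) h1; omega
  have hf : ∀ x, ∃ y, x ∈ A → r x y ∧ pos y = rk6 r pos A x := by
    intro x
    by_cases hx : x ∈ A
    · obtain ⟨y, hy⟩ := hsurj x _ (hrk1 x hx)
      exact ⟨y, fun _ => hy⟩
    · exact ⟨x, fun h => absurd h hx⟩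
  choose f hf using hf
  have finj : Set.InjOn f A := by
    intro x hx y hy h
    have h1 := hf x hx
    have h2 := hf y hy
    refine hrkinj x hx y hy (hr.trans h1.1 (h ▸ hr.symm h2.1)) ?_
    rw [← h1.2, ← h2.2, h]
  have hPle : ∀ x ∈ A, P (f x) ≤ P x ∧ (P (f x) = P x → f x = x) := by
    intro x hx
    have h1 := hf x hx
    have h2 := hrkpos x
    rcases (h1.2 ▸ h2 : pos (f x) ≤ pos x).lt_or_eq with h3 | h3
    · have := hP _ _ (hr.symm h1.1) h3
      exact ⟨this.le, fun h => by omega⟩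
    · have := hinj _ _ (hr.symm h1.1) h3
      rw [this]; simp
  have hsum : ∑ x ∈ A.image f, P x = ∑ x ∈ A, P (f x) := Finset.sum_image finj
  refine ⟨A.image f, ?_, Finset.card_image_of_injOn finj, ?_, ?_⟩
  · intro x
    constructor
    · intro hx
      obtain ⟨y, hy, rfl⟩ := Finset.mem_image.1 hx
      have h1 := hf y hy
      rw [h1.2]
      refine Finset.card_le_card ?_
      intro z hz
      have hz' := Finset.mem_filter.1 hz
      exact Finset.mem_filter.2 ⟨hz'.1, hr.trans (hr.symm h1.1) hz'.2.1⟩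
    · intro hx
      have hsj := Finset.surj_on_of_inj_on_of_card_le (s := A.filter (r x))
        (t := Finset.Icc 1 (A.filter (r x)).card) (fun y _ => rk6 r pos A y)
        (by
          intro y hy
          have hy' := Finset.mem_filter.1 hy
          refine Finset.mem_Icc.2 ⟨hrk1 y hy'.1, Finset.card_le_card ?_⟩
          intro z hz
          have hz' := Finset.mem_filter.1 hz
          exact Finset.mem_filter.2 ⟨hz'.1, hr.trans hy'.2 hz'.2.1⟩)
        (by
          intro y z hy hz h
          have hy' := Finset.mem_filter.1 hy
          have hz' := Finset.mem_filter.1 hz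
          exact hrkinj y hy'.1 z hz'.1 (hr.trans (hr.symm hy'.2) hz'.2) h)
        (by simp) (pos x) (Finset.mem_Icc.2 ⟨hpos x, hx⟩)
      obtain ⟨y, hy, hyx⟩ := hsj
      have hy' := Finset.mem_filter.1 hy
      have h1 := hf y hy'.1
      refine Finset.mem_image.2 ⟨y, hy'.1, ?_⟩
      exact hinj _ _ (hr.symm (hr.trans hy'.2 h1.1)) (h1.2.trans hyx.symm)
  · rw [hsum]
    exact Finset.sum_le_sum fun x hx => (hPle x hx).1
  · intro h
    rw [hsum] at h
    have h2 := (Finset.sum_eq_sum_iff_of_le fun x hx => (hPle x hx).1).1 h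
    have h3 : ∀ x ∈ A, f x = x := fun x hx => (hPle x hx).2 (h2 x hx)
    calc A.image f = A.image id := Finset.image_congr (fun x hx => h3 x hx)
      _ = A := Finset.image_id

/-! ### The n-th largest value -/

theorem bdd6 {α : Type*} (v : α → NNReal) (hv : Admissible v) : ∃ M : NNReal, 1 ≤ M ∧ ∀ x, v x ≤ M := by
  have h := hv 1 one_pos
  obtain ⟨M, hM⟩ := (h.image v).bddAbove
  refine ⟨max 1 M, le_max_left _ _, fun x => ?_⟩
  by_cases hx : 1 < v x
  · exact le_max_of_le_right (hM ⟨x, hx, rfl⟩)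
  · exact le_max_of_le_left (not_lt.1 hx)

theorem lt_nth6 {α : Type*} (v : α → NNReal) (hv : Admissible v) (n : ℕ) (hn : 1 ≤ n) (s : NNReal) :
    s < nthLargest v n ↔ ∃ Ω : Finset α, Ω.card = n ∧ ∀ x ∈ Ω, s < v x := by
  obtain ⟨M, -, hM⟩ := bdd6 v hv
  unfold nthLargest
  constructor
  · intro h
    have hne : {t | ∃ Ω : Finset α, Ω.card = n ∧ ∀ x ∈ Ω, t ≤ v x}.Nonempty := by
      by_contra hne
      rw [Set.not_nonempty_iff_eq_empty] at hne
      rw [hne] at h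
      simp at h
    obtain ⟨t, ⟨Ω, h1, h2⟩, hst⟩ := exists_lt_of_lt_csSup hne h
    exact ⟨Ω, h1, fun x hx => hst.trans_le (h2 x hx)⟩
  · rintro ⟨Ω, h1, h2⟩
    have hne : Ω.Nonempty := Finset.card_pos.1 (by omega)
    obtain ⟨x, hx, hmin⟩ := Ω.exists_min_image v hne
    refine (h2 x hx).trans_le (le_csSup ⟨M, ?_⟩ ⟨Ω, h1, hmin⟩)
    rintro t ⟨Ω', h3, h4⟩
    obtain ⟨y, hy⟩ : Ω'.Nonempty := Finset.card_pos.1 (by omega)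
    exact (h4 y hy).trans (hM y)

open Classical in
theorem lt_nth_sub6 {α : Type*} (v : α → NNReal) (hv : Admissible v) (n : ℕ) (hn : 1 ≤ n) (s : NNReal)
    (p : α → Prop) (A : Finset α) (hA : ∀ x, x ∈ A ↔ s < v x) :
    s < nthLargest (fun y : {y // p y} => v y.1) n ↔ n ≤ (A.filter p).card := by
  have hv' : Admissible (fun y : {y // p y} => v y.1) := by
    intro t ht
    have h := Set.Finite.preimage (f := (Subtype.val : {y // p y} → α)) Subtype.val_injective.injOn (hv t ht)
    exact h
  rw [lt_nth6 _ hv' n hn]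
  constructor
  · rintro ⟨Ω, rfl, h⟩
    rw [← Finset.card_map (Function.Embedding.subtype p)]
    refine Finset.card_le_card ?_
    intro x hx
    obtain ⟨y, hy, rfl⟩ := Finset.mem_map.1 hx
    exact Finset.mem_filter.2 ⟨(hA _).2 (h y hy), y.2⟩
  · intro h
    obtain ⟨Ω, hsub, hc⟩ := Finset.exists_subset_card_eq h
    refine ⟨Ω.subtype p, ?_, ?_⟩
    · rw [Finset.card_subtype, Finset.filter_true_of_mem, hc]
      intro x hx
      exact (Finset.mem_filter.1 (hsub hx)).2
    · intro x hx
      exact (hA _).1 (Finset.mem_filter.1 (hsub (Finset.mem_subtype.1 hx))).1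

/-! ### Geometry of directions -/

def L6 (d : ℕ) (i : Fin d) : ℤ := (d : ℤ) - (i : ℤ)

def P6 (d : ℕ) (x : ZLat d) : ℕ := (∑ i, ((4 * d + 1) * x i - L6 d i) ^ 2).toNat

theorem P6_cast (d : ℕ) (x : ZLat d) : (P6 d x : ℤ) = ∑ i, ((4 * d + 1) * x i - L6 d i) ^ 2 :=
  Int.toNat_of_nonneg (Finset.sum_nonneg fun _ _ => sq_nonneg _)

/-- Structural data of a direction. -/
def Good6 {d : ℕ} (e : Fin d → ℝ) : Prop :=
  ∃ (v : ZLat d) (q : ℤ) (i0 : Fin d), (e = fun k => (q : ℝ) / 2 * (v k : ℝ)) ∧ v i0 = 1 ∧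
    q * ∑ k, v k * v k = 2 ∧ 0 < ∑ k, L6 d k * v k ∧ ∑ k, L6 d k * v k ≤ 2 * d

theorem good_of_mem6 (d : ℕ) (e : Fin d → ℝ) (he : e ∈ EvecList d) : Good6 e := by
  simp only [EvecList, List.mem_append, List.mem_map, List.mem_flatMap, List.mem_filterMap,
    List.mem_finRange, true_and] at he
  rcases he with (⟨i, rfl⟩ | ⟨i, j, h⟩) | ⟨i, j, h⟩
  · refine ⟨fun k => if k = i then 1 else 0, 2, i, ?_, by simp, by simp, ?_, ?_⟩
    · funext k; simp [stdVec]
    · simp [L6]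
    · simp [L6]; omega
  · by_cases hij : i < j
    · simp only [hij, if_true, Option.some.injEq] at h
      have hne : i ≠ j := hij.ne
      refine ⟨fun k => (if k = i then 1 else 0) + (if k = j then 1 else 0), 1, i, ?_, ?_, ?_, ?_, ?_⟩
      · rw [← h]; funext k; simp [stdVec]; ring
      · simp [hne]
      · simp [mul_add, Finset.sum_add_distrib, hne, hne.symm]
      · simp [mul_add, Finset.sum_add_distrib, L6]; omega
      · simp [mul_add, Finset.sum_add_distrib, L6]; omega
    · simp [hij] at h
  · by_cases hij : i < j
    · simp only [hij, if_true, Option.some.injEq] at h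
      have hne : i ≠ j := hij.ne
      refine ⟨fun k => (if k = i then 1 else 0) - (if k = j then 1 else 0), 1, i, ?_, ?_, ?_, ?_, ?_⟩
      · rw [← h]; funext k; simp [stdVec]; ring
      · simp [hne]
      · simp [mul_sub, Finset.sum_sub_distrib, hne, hne.symm]
      · simp [mul_sub, Finset.sum_sub_distrib, L6]; omega
      · simp [mul_sub, Finset.sum_sub_distrib, L6]; omega
    · simp [hij] at h

theorem sameLine_equiv6 {d : ℕ} (e : Fin d → ℝ) : Equivalence (sameLine e) := by
  refine ⟨fun x => ⟨0, ?_⟩, ?_, ?_⟩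
  · funext i; simp
  · rintro x y ⟨c, h⟩
    refine ⟨-c, ?_⟩
    funext i
    have := congrFun h i
    simp only [Pi.smul_apply, smul_eq_mul] at this ⊢
    linarith
  · rintro x y z ⟨c, h⟩ ⟨c', h'⟩
    refine ⟨c + c', ?_⟩
    funext i
    have h1 := congrFun h i
    have h2 := congrFun h' i
    simp only [Pi.smul_apply, smul_eq_mul] at h1 h2 ⊢
    linarith

theorem good_facts6 {d : ℕ} (e : Fin d → ℝ) (he : Good6 e) :
    ∃ (v : ZLat d) (a b : ℤ), 0 < b ∧ b < a ∧
      (∀ x y, sameLine e x y ↔ ∃ c : ℤ, y = fun i => x i + c * v i) ∧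
      (∀ x (c : ℤ), pairing e (fun i => x i + c * v i) = pairing e x + 2 * c) ∧
      (∀ x (c : ℤ), (P6 d (fun i => x i + c * v i) : ℤ) =
        P6 d x + c * (a * (pairing e x + c) - b)) := by
  obtain ⟨v, q, i0, rfl, hv, hq, hL1, hL2⟩ := he
  have hV : 1 ≤ ∑ k, v k * v k := by
    have h0 : 0 ≤ ∑ k, v k * v k := Finset.sum_nonneg fun k _ => mul_self_nonneg _
    rcases h0.lt_or_eq with h | h
    · omega
    · rw [← h] at hq; simp at hq
  have hpair : ∀ x : ZLat d, pairing (fun k => (q : ℝ) / 2 * (v k : ℝ)) x = q * ∑ k, v k * x k := by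
    intro x
    unfold pairing
    rw [Int.floor_eq_iff]
    have : 2 * ∑ i, (q : ℝ) / 2 * (v i : ℝ) * (x i : ℝ) = ((q * ∑ k, v k * x k : ℤ) : ℝ) := by
      push_cast
      rw [Finset.mul_sum, Finset.mul_sum]
      refine Finset.sum_congr rfl fun k _ => ?_
      ring
    rw [this]
    constructor
    · exact le_refl _
    · linarith
  have hvx : ∀ (x : ZLat d) (c : ℤ), ∑ k, v k * (x k + c * v k) = ∑ k, v k * x k + c * ∑ k, v k * v k := by
    intro x c
    rw [Finset.mul_sum, ← Finset.sum_add_distrib]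
    exact Finset.sum_congr rfl fun k _ => by ring
  refine ⟨v, (4 * d + 1) ^ 2 * ∑ k, v k * v k, 2 * (4 * d + 1) * ∑ k, L6 d k * v k, ?_, ?_, ?_, ?_, ?_⟩
  · positivity
  · have hd0 : (0 : ℤ) ≤ d := by positivity
    nlinarith [mul_le_mul_of_nonneg_left hL2 (show (0 : ℤ) ≤ 2 * (4 * d + 1) by positivity),
      mul_le_mul_of_nonneg_left hV (show (0 : ℤ) ≤ (4 * d + 1) ^ 2 by positivity)]
  · intro x y
    constructor
    · rintro ⟨c, hc⟩
      have h0 := congrFun hc i0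
      simp only [Pi.smul_apply, smul_eq_mul, hv, Int.cast_one, mul_one] at h0
      refine ⟨y i0 - x i0, ?_⟩
      funext k
      have h1 := congrFun hc k
      simp only [Pi.smul_apply, smul_eq_mul] at h1
      have h2 : (x k : ℝ) - y k = (x i0 - y i0) * v k := by rw [h1, h0]; ring
      have h3 : x k - y k = (x i0 - y i0) * v k := by exact_mod_cast h2
      linarith
    · rintro ⟨c, rfl⟩
      have hq0 : (q : ℝ) ≠ 0 := by
        intro h
        have : q = 0 := by exact_mod_cast h
        rw [this] at hq; simp at hq
      refine ⟨-(c : ℝ) * 2 / q, ?_⟩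
      funext k
      simp only [Pi.smul_apply, smul_eq_mul]
      push_cast
      field_simp
      ring
  · intro x c
    rw [hpair, hpair, hvx]
    linear_combination c * hq
  · intro x c
    rw [hpair, P6_cast, P6_cast]
    have h1 : ∑ i, ((4 * (d : ℤ) + 1) * (x i + c * v i) - L6 d i) ^ 2 =
        ∑ i, ((4 * (d : ℤ) + 1) * x i - L6 d i) ^ 2 +
        (2 * (4 * (d : ℤ) + 1) ^ 2 * c * ∑ i, v i * x i + (4 * (d : ℤ) + 1) ^ 2 * c ^ 2 * ∑ i, v i * v i
        - 2 * (4 * (d : ℤ) + 1) * c * ∑ i, L6 d i * v i) := by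
      simp only [Finset.mul_sum]
      rw [← Finset.sum_add_distrib, ← Finset.sum_sub_distrib, ← Finset.sum_add_distrib]
      refine Finset.sum_congr rfl fun k _ => ?_
      ring
    rw [h1]
    linear_combination -(c * (4 * (d : ℤ) + 1) ^ 2 * ∑ i, v i * x i) * hq

theorem posIdx_pos6 (m : ℤ) : 1 ≤ posIdx m := by
  unfold posIdx; split_ifs <;> omega

theorem step6 {d : ℕ} (e : Fin d → ℝ) (he : Good6 e) (u : ZLat d → NNReal) (hu : Admissible u)
    (s : NNReal) (A : Finset (ZLat d)) (hA : ∀ x, x ∈ A ↔ s < u x) :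
    ∃ B : Finset (ZLat d), (∀ x, x ∈ B ↔ s < stepR e u x) ∧ B.card = A.card ∧
      ∑ x ∈ B, P6 d x ≤ ∑ x ∈ A, P6 d x ∧ (∑ x ∈ B, P6 d x = ∑ x ∈ A, P6 d x → B = A) := by
  classical
  obtain ⟨v, a, b, hb, hab, hline, hpair, hP⟩ := good_facts6 e he
  obtain ⟨B, h1, h2⟩ := rearr6 (sameLine e) (sameLine_equiv6 e) (fun x => posIdx (pairing e x))
    (fun x => posIdx_pos6 _)
    (by
      intro x y hxy h
      obtain ⟨c, rfl⟩ := (hline x y).1 hxy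
      have hc : c = 0 := by
        simp only [hpair] at h
        unfold posIdx at h
        split_ifs at h <;> omega
      subst hc
      simp)
    (by
      intro x n hn
      have : ∃ c : ℤ, posIdx (pairing e x + 2 * c) = n := by
        rcases Int.even_or_odd' (pairing e x - n) with ⟨k, hk | hk⟩
        · refine ⟨-k, ?_⟩
          unfold posIdx
          split_ifs <;> omega
        · refine ⟨-k - n, ?_⟩
          unfold posIdx
          split_ifs <;> omega
      obtain ⟨c, hc⟩ := this
      exact ⟨_, (hline x _).2 ⟨c, rfl⟩, by simp only [hpair]; exact hc⟩)
    (P6 d)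
    (by
      intro x y hxy h
      obtain ⟨c, rfl⟩ := (hline x y).1 hxy
      simp only [hpair] at h
      zify
      rw [hP]
      have key : (0 < c ∧ 1 ≤ pairing e x + c) ∨ (c < 0 ∧ pairing e x + c ≤ 0) := by
        unfold posIdx at h
        split_ifs at h <;> omega
      have : 0 < c * (a * (pairing e x + c) - b) := by
        rcases key with ⟨k1, k2⟩ | ⟨k1, k2⟩
        · apply mul_pos k1; nlinarith
        · apply mul_pos_of_neg_of_neg k1; nlinarith
      linarith)
    A
  refine ⟨B, fun x => ?_, h2⟩
  rw [h1 x, stepR, lt_nth_sub6 u hu _ (posIdx_pos6 _) s (fun y => sameLine e x y) A hA]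

theorem stepAdm6 {d : ℕ} (e : Fin d → ℝ) (he : Good6 e) (u : ZLat d → NNReal) (hu : Admissible u) :
    Admissible (stepR e u) := by
  intro t ht
  obtain ⟨B, hB, -⟩ := step6 e he u hu t (hu t ht).toFinset (by intro x; simp)
  refine B.finite_toSet.subset ?_
  intro x hx
  exact (hB x).2 hx

theorem good_iter6 (d : ℕ) (hd : 2 ≤ d) (k : ℕ) :
    Good6 ((EvecList d).getD (k % (EvecList d).length) 0) := by
  have hlen : 0 < (EvecList d).length := by
    simp only [EvecList, List.length_append, List.length_map, List.length_finRange]; omega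
  have hk := Nat.mod_lt k hlen
  apply good_of_mem6
  rw [List.getD_eq_getElem _ _ hk]
  exact List.getElem_mem hk

theorem iterAdm6 (d : ℕ) (hd : 2 ≤ d) (u : ZLat d → NNReal) (hu : Admissible u) (k : ℕ) :
    Admissible (iterR d u k) := by
  induction k with
  | zero => exact hu
  | succ k ih => exact stepAdm6 _ (good_iter6 d hd k) _ ih

theorem nat_stab6 (f : ℕ → ℕ) (hf : ∀ k, f (k + 1) ≤ f k) : ∃ K, ∀ k, K ≤ k → f (k + 1) = f k := by
  have hanti : Antitone f := antitone_nat_of_succ_le hf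
  obtain ⟨K, hK⟩ := WellFounded.has_min (wellFounded_lt (α := ℕ)) (Set.range f) ⟨f 0, 0, rfl⟩
  obtain ⟨⟨K, rfl⟩, hmin⟩ := hK
  refine ⟨K, fun k hk => ?_⟩
  have h1 := hmin _ ⟨k + 1, rfl⟩
  have h2 := hanti hk
  have h3 := hf k
  omega

/-- The superlevel sets stabilize. -/
theorem stab6 (d : ℕ) (hd : 2 ≤ d) (u : ZLat d → NNReal) (hu : Admissible u) (s : NNReal) (hs : 0 < s) :
    ∃ (S : Finset (ZLat d)) (K : ℕ), S.card = (hu s hs).toFinset.card ∧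
      ∀ k, K ≤ k → ∀ x, x ∈ S ↔ s < iterR d u k x := by
  let A : ℕ → Finset (ZLat d) := fun k => (iterAdm6 d hd u hu k s hs).toFinset
  have hA : ∀ k x, x ∈ A k ↔ s < iterR d u k x := by
    intro k x; simp [A]
  have hstep : ∀ k, (A (k + 1)).card = (A k).card ∧
      ∑ x ∈ A (k + 1), P6 d x ≤ ∑ x ∈ A k, P6 d x ∧
      (∑ x ∈ A (k + 1), P6 d x = ∑ x ∈ A k, P6 d x → A (k + 1) = A k) := by
    intro k
    obtain ⟨B, hB, h⟩ := step6 _ (good_iter6 d hd k) _ (iterAdm6 d hd u hu k) s (A k) (hA k)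
    have : A (k + 1) = B := by
      ext x
      rw [hA, hB]
      rfl
    rw [this]
    exact h
  obtain ⟨K, hK⟩ := nat_stab6 (fun k => ∑ x ∈ A k, P6 d x) (fun k => (hstep k).2.1)
  have hcard : ∀ k, (A k).card = (A 0).card := by
    intro k
    induction k with
    | zero => rfl
    | succ k ih => rw [(hstep k).1, ih]
  have hconst : ∀ k, K ≤ k → A k = A K := by
    intro k hk
    induction k, hk using Nat.le_induction with
    | base => rfl
    | succ k hk ih => rw [(hstep k).2.2 (hK k hk), ih]
  refine ⟨A K, K, hcard K, fun k hk x => ?_⟩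
  rw [← hconst k hk, hA]

theorem conv6 (d : ℕ) (hd : 2 ≤ d) (u : ZLat d → NNReal) (hu : Admissible u) (x : ZLat d) :
    Tendsto (fun k => iterR d u k x) atTop (𝓝 (RZd d u x)) := by
  obtain ⟨M, hM1, hM⟩ := bdd6 u hu
  have hMpos : 0 < M := lt_of_lt_of_le one_pos hM1
  have hbdd : ∀ᶠ k in atTop, iterR d u k x ≤ M := by
    obtain ⟨S, K, hc, hS⟩ := stab6 d hd u hu M hMpos
    have hS0 : S = ∅ := by
      rw [← Finset.card_eq_zero, hc, Finset.card_eq_zero]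
      ext y
      simp [hM y]
    filter_upwards [eventually_ge_atTop K] with k hk
    have := hS k hk x
    rw [hS0] at this
    simpa using this
  have hex : ∃ c, Tendsto (fun k => iterR d u k x) atTop (𝓝 c) := by
    refine tendsto_of_no_upcrossings (s := Set.univ) dense_univ ?_ ⟨M, by simpa using hbdd⟩
      ⟨0, by simp⟩
    rintro a - b - hab ⟨h1, h2⟩
    obtain ⟨k0, hk0⟩ := h1.exists
    have ha : 0 < a := (zero_le).trans_lt hk0
    obtain ⟨S, K, -, hS⟩ := stab6 d hd u hu a ha
    obtain ⟨k1, hk1, hk1'⟩ := (h1.and_eventually (eventually_ge_atTop K)).exists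
    obtain ⟨k2, hk2, hk2'⟩ := (h2.and_eventually (eventually_ge_atTop K)).exists
    have := (hS k1 hk1' x).1 ((hS k2 hk2' x).2 (hab.trans hk2))
    exact absurd this (not_lt.2 hk1.le)
  exact tendsto_nhds_limUnder hex

theorem gap6 {α : Type*} (u : α → NNReal) (hu : Admissible u) (t : NNReal) (ht : 0 < t) :
    ∃ s, t < s ∧ ∀ x, t < u x ↔ s < u x := by
  by_cases hne : (hu t ht).toFinset.Nonempty
  · obtain ⟨x0, hx0, hmin⟩ := (hu t ht).toFinset.exists_min_image u hne
    have hx0' : t < u x0 := by simpa using hx0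
    obtain ⟨s, hs1, hs2⟩ := exists_between hx0'
    refine ⟨s, hs1, fun x => ⟨fun h => hs2.trans_le (hmin x (by simpa using h)), hs1.trans⟩⟩
  · rw [Finset.not_nonempty_iff_eq_empty] at hne
    refine ⟨t + 1, by simp, fun x => ⟨fun h => ?_, fun h => lt_of_le_of_lt (by simp) h⟩⟩
    have : x ∈ (hu t ht).toFinset := by simpa using h
    rw [hne] at this
    simp at this

/-- An admissible function on ℤ^d (d ≥ 2) is equimeasurable with its Schwarz
rearrangement. -/
theorem stmt6 (d : ℕ) (hd : 2 ≤ d) (u : ZLat d → NNReal) (hu : Admissible u) :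
    ∀ t : NNReal, 0 < t → Nonempty ({x | t < u x} ≃ {x | t < RZd d u x}) := by
  intro t ht
  obtain ⟨s, hts, hgap⟩ := gap6 u hu t ht
  obtain ⟨S, K, hSc, hS⟩ := stab6 d hd u hu t ht
  obtain ⟨S', K', hSc', hS'⟩ := stab6 d hd u hu s (ht.trans hts)
  have hcc : S'.card = S.card := by
    rw [hSc, hSc']
    congr 1
    ext x
    simpa using (hgap x).symm
  have hsub : S' ⊆ S := by
    intro x hx
    have h1 := (hS' (max K K') (le_max_right _ _) x).1 hx
    exact (hS (max K K') (le_max_left _ _) x).2 (hts.trans h1)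
  have hSS : S' = S := Finset.eq_of_subset_of_card_le hsub hcc.ge
  have hlev : {x | t < RZd d u x} = (S : Set (ZLat d)) := by
    ext x
    have hc := conv6 d hd u hu x
    simp only [Set.mem_ofPred_eq, Finset.mem_coe]
    constructor
    · intro h
      obtain ⟨k, hk, hk'⟩ := ((hc.eventually (lt_mem_nhds h)).and (eventually_ge_atTop K)).exists
      exact (hS k hk' x).2 hk
    · intro h
      refine hts.trans_le (ge_of_tendsto hc ?_)
      filter_upwards [eventually_ge_atTop K'] with k hk
      exact ((hS' k hk x).1 (hSS ▸ h)).le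
  have hlev' : {x | t < u x} = ((hu t ht).toFinset : Set (ZLat d)) := by simp
  rw [hlev, hlev']
  exact ⟨Finset.equivOfCardEq hSc.symm⟩

end
end

section
/- Let H : [0,∞) → [0,∞) be nonincreasing and G : [0,∞)×[0,∞) → [0,∞) be supermodular. (i) For all finitely supported u, v : ℤ → [0,∞): Σ_{x,y∈ℤ} G(u(x), v(y)) H(|x−y|) ≤ Σ_{x,y∈ℤ} G(R_ℤ u(x), R_ℤ v(y)) H(|x−y|). (ii) The same inequality holds for finitely supported u, v on the half-integers ℤ+1/2, with R_{ℤ+1/2} in place of R_ℤ. (iii) For finitely supported u : ℤ → [0,∞) and v : ℤ+1/2 → [0,∞): Σ_{x∈ℤ, y∈ℤ+1/2} G(u(x), v(y)) H(|x−y|) ≤ Σ_{x∈ℤ, y∈ℤ+1/2} G(R_ℤ u(x), R_{ℤ+1/2} v(y)) H(|x−y|). (All sums are taken in [0,∞].) -/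
open Filter Topology

noncomputable section

/-- The one-dimensional Schwarz rearrangement on ℤ. -/
def RZ1 (u : ℤ → NNReal) : ℤ → NNReal := fun x => nthLargest u (posIdx (2 * x))

/-- The one-dimensional Schwarz rearrangement on ℤ+1/2, where the index k : ℤ
represents the half-integer point k + 1/2. -/
def RHalf (u : ℤ → NNReal) : ℤ → NNReal := fun k => nthLargest u (posIdx (2 * k + 1))

theorem swapLem (w : ℤ → ℝ) (c : ℤ) (hw : ∀ x y : ℤ, |2*x-c| ≤ |2*y-c| → w y ≤ w x)
    (s : ℤ) (k : ℕ) (hs : |2*s+k-1-c| ≤ 1) (D : Finset ℤ) (hD : D.card = k) :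
    ∑ d ∈ D, w d ≤ ∑ d ∈ Finset.Ico s (s+k), w d := by
  classical
  set J := Finset.Ico s (s+k) with hJ
  have hJc : J.card = k := by simp [hJ]
  rw [← Finset.sum_inter_add_sum_sdiff D J, ← Finset.sum_inter_add_sum_sdiff J D,
    Finset.inter_comm J D]
  have hcard : (D \ J).card = (J \ D).card := by
    have h1 := Finset.card_sdiff_add_card_inter D J
    have h2 := Finset.card_sdiff_add_card_inter J D
    rw [Finset.inter_comm] at h2
    omega
  have key : ∑ d ∈ D \ J, w d ≤ ∑ d ∈ J \ D, w d := by
    let f := Finset.equivOfCardEq hcard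
    rw [← Finset.sum_coe_sort (D \ J), ← Finset.sum_coe_sort (J \ D)]
    rw [← Equiv.sum_comp f]
    refine Finset.sum_le_sum fun i _ => ?_
    apply hw
    have h1 := i.2
    have h2 := (f i).2
    simp only [Finset.mem_sdiff, hJ, Finset.mem_Ico] at h1 h2
    grind
  linarith

theorem chainSum (w : ℤ → ℝ) (A B : Finset ℤ) (a b : ℤ) (hA : ∀ x ∈ A, x < a)
    (hB : ∀ x ∈ B, x < b) :
    ∑ x ∈ insert a A, ∑ y ∈ insert b B, w (x-y) = ∑ x ∈ A, ∑ y ∈ B, w (x-y) +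
      ∑ d ∈ (insert a A).image (· - b) ∪ B.image (a - ·), w d := by
  classical
  have ha : a ∉ A := fun h => lt_irrefl _ (hA a h)
  have hb : b ∉ B := fun h => lt_irrefl _ (hB b h)
  rw [Finset.sum_union, Finset.sum_image (by intro x _ y _ h; simpa using h),
    Finset.sum_image (by intro x _ y _ h; simpa using h), Finset.sum_insert ha,
    Finset.sum_insert ha, Finset.sum_insert hb]
  · simp only [Finset.sum_insert hb, Finset.sum_add_distrib]
    ring
  · rw [Finset.disjoint_left]
    intro z hz hz'
    simp only [Finset.mem_image, Finset.mem_insert] at hz hz'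
    grind

theorem chainCard (A B : Finset ℤ) (a b : ℤ) (hA : ∀ x ∈ A, x < a)
    (hB : ∀ x ∈ B, x < b) :
    ((insert a A).image (· - b) ∪ B.image (a - ·)).card = A.card + B.card + 1 := by
  classical
  have ha : a ∉ A := fun h => lt_irrefl _ (hA a h)
  rw [Finset.card_union_of_disjoint, Finset.card_image_of_injective _ (by intro x y h; simpa using h),
    Finset.card_image_of_injective _ (by intro x y h; simpa using h), Finset.card_insert_of_notMem ha]
  · omega
  · rw [Finset.disjoint_left]
    intro z hz hz'
    simp only [Finset.mem_image, Finset.mem_insert] at hz hz'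
    grind

theorem splitMax (A : Finset ℤ) (m : ℕ) (h : A.card = m + 1) :
    ∃ a A', A = insert a A' ∧ (∀ x ∈ A', x < a) ∧ A'.card = m := by
  classical
  have hne : A.Nonempty := by rw [← Finset.card_pos]; omega
  refine ⟨A.max' hne, A.erase (A.max' hne), ?_, ?_, ?_⟩
  · rw [Finset.insert_erase (A.max'_mem hne)]
  · intro x hx; exact A.lt_max'_of_mem_erase_max' hne hx
  · rw [Finset.card_erase_of_mem (A.max'_mem hne)]; omega

theorem setRiesz (w : ℤ → ℝ) (c : ℤ) (hw : ∀ x y : ℤ, |2*x-c| ≤ |2*y-c| → w y ≤ w x)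
    (m : ℕ) : ∀ (n : ℕ) (p q : ℤ) (A B : Finset ℤ), A.card = m → B.card = n →
      |2*p+m-2*q-n-c| ≤ 1 →
      ∑ x ∈ A, ∑ y ∈ B, w (x-y) ≤
        ∑ x ∈ Finset.Ico p (p+m), ∑ y ∈ Finset.Ico q (q+n), w (x-y) := by
  classical
  induction m with
  | zero =>
    intro n p q A B hA hB h
    rw [Finset.card_eq_zero] at hA
    simp [hA]
  | succ m ih =>
    intro n p q A B hA hB h
    cases n with
    | zero =>
      rw [Finset.card_eq_zero] at hB
      simp [hB]
    | succ n =>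
      obtain ⟨a, A', rfl, hA', hAc⟩ := splitMax A m hA
      obtain ⟨b, B', rfl, hB', hBc⟩ := splitMax B n hB
      have e1 : Finset.Ico p (p+(m+1:ℕ)) = insert (p+m) (Finset.Ico p (p+m)) := by
        ext z; simp only [Finset.mem_Ico, Finset.mem_insert]; push_cast; omega
      have e2 : Finset.Ico q (q+(n+1:ℕ)) = insert (q+n) (Finset.Ico q (q+n)) := by
        ext z; simp only [Finset.mem_Ico, Finset.mem_insert]; push_cast; omega
      have e3 : (insert (p+(m:ℤ)) (Finset.Ico p (p+m))).image (· - (q+(n:ℤ))) ∪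
          (Finset.Ico q (q+n)).image (p+(m:ℤ) - ·) =
          Finset.Ico (p-q-n) (p-q-n+(m+n+1:ℕ)) := by
        ext z
        simp only [Finset.mem_union, Finset.mem_image, Finset.mem_Ico, Finset.mem_insert]
        push_cast
        constructor
        · rintro (⟨x, hx, rfl⟩ | ⟨x, hx, rfl⟩) <;> omega
        · intro hz
          by_cases hh : z ≤ p + m - q - n
          · left; exact ⟨z + q + n, by omega, by omega⟩
          · right; exact ⟨p + m - z, by omega, by omega⟩
      rw [chainSum w A' B' a b hA' hB', e1, e2,
        chainSum w _ _ (p+m) (q+n) (by intro x hx; simp at hx; omega)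
          (by intro x hx; simp at hx; omega), e3]
      apply add_le_add
      · apply ih n p q A' B' hAc hBc
        push_cast at h
        convert h using 2; ring
      · apply swapLem w c hw
        · push_cast at h ⊢
          convert h using 2; ring
        · rw [chainCard _ _ _ _ hA' hB', hAc, hBc]

theorem abelId (N : ℕ) (g k : ℕ → ℝ) :
    ∑ i ∈ Finset.range N, g i * k i =
      ∑ m ∈ Finset.range N, (g m - g (m+1)) * ∑ i ∈ Finset.range (m+1), k i
        + g N * ∑ i ∈ Finset.range N, k i := by
  induction N with
  | zero => simp
  | succ N ih =>
    rw [Finset.sum_range_succ, ih, Finset.sum_range_succ _ N, Finset.sum_range_succ k N]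
    ring

theorem abelLe (N : ℕ) (g k k' : ℕ → ℝ) (hg : ∀ i, g (i+1) ≤ g i) (h0 : g N = 0)
    (hk : ∀ m, ∑ i ∈ Finset.range (m+1), k i ≤ ∑ i ∈ Finset.range (m+1), k' i) :
    ∑ i ∈ Finset.range N, g i * k i ≤ ∑ i ∈ Finset.range N, g i * k' i := by
  rw [abelId N g k, abelId N g k', h0, zero_mul, zero_mul, add_zero, add_zero]
  exact Finset.sum_le_sum fun m _ => mul_le_mul_of_nonneg_left (hk m) (sub_nonneg.2 (hg m))

theorem abel2 (N : ℕ) (M K K' : ℕ → ℕ → ℝ) (h1 : ∀ j, M N j = 0) (h2 : ∀ i, M i N = 0)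
    (hM : ∀ i j, M i (j+1) + M (i+1) j ≤ M i j + M (i+1) (j+1))
    (hK : ∀ m n, ∑ i ∈ Finset.range (m+1), ∑ j ∈ Finset.range (n+1), K i j ≤
      ∑ i ∈ Finset.range (m+1), ∑ j ∈ Finset.range (n+1), K' i j) :
    ∑ i ∈ Finset.range N, ∑ j ∈ Finset.range N, M i j * K i j ≤
      ∑ i ∈ Finset.range N, ∑ j ∈ Finset.range N, M i j * K' i j := by
  have id (L : ℕ → ℕ → ℝ) : ∑ i ∈ Finset.range N, ∑ j ∈ Finset.range N, M i j * L i j =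
      ∑ m ∈ Finset.range N, ∑ j ∈ Finset.range N,
        (M m j - M (m+1) j) * ∑ i ∈ Finset.range (m+1), L i j := by
    rw [Finset.sum_comm, Finset.sum_comm (s := Finset.range N) (t := Finset.range N)
      (f := fun m j => (M m j - M (m+1) j) * ∑ i ∈ Finset.range (m+1), L i j)]
    refine Finset.sum_congr rfl fun j _ => ?_
    rw [abelId N (fun i => M i j) (fun i => L i j), h1]
    simp
  rw [id, id]
  refine Finset.sum_le_sum fun m _ => ?_
  apply abelLe
  · intro j; have := hM m j; linarith
  · simp [h2]
  · intro n
    rw [Finset.sum_comm, Finset.sum_comm (s := Finset.range (n+1))]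
    exact hK m n

theorem enumExists (u : ℤ → NNReal) (hu : (Function.support u).Finite) :
    ∃ (e : ℕ → ℤ) (N : ℕ), Function.Injective e ∧ Antitone (u ∘ e) ∧
      Function.support u ⊆ Set.range e ∧ ∀ i, N ≤ i → u (e i) = 0 := by
  classical
  set S := hu.toFinset with hS
  let f : Fin S.card ≃ S := S.equivFin.symm
  let g : Fin S.card → NNRealᵒᵈ := fun i => OrderDual.toDual (u (f i))
  let f' : Fin S.card ≃ S := (Tuple.sort g).trans f
  have hmono : ∀ i j, i ≤ j → u (f' j) ≤ u (f' i) := fun i j h => Tuple.monotone_sort g h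
  have : Infinite {x : ℤ // x ∉ S} := by
    have := (S.finite_toSet.infinite_compl)
    exact this.to_subtype
  let em : ℕ ↪ {x : ℤ // x ∉ S} := Infinite.natEmbedding _
  have hz : ∀ x, x ∉ S → u x = 0 := by intro x hx; simpa [hS] using hx
  let e : ℕ → ℤ := fun i => if h : i < S.card then (f' ⟨i, h⟩ : ℤ) else em (i - S.card)
  have e1 : ∀ i (h : i < S.card), e i = f' ⟨i, h⟩ := fun i h => dif_pos h
  have e2 : ∀ i, ¬ i < S.card → e i = em (i - S.card) := fun i h => dif_neg h
  refine ⟨e, S.card, ?_, ?_, ?_, ?_⟩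
  · intro i j hij
    by_cases hi : i < S.card <;> by_cases hj : j < S.card
    · rw [e1 i hi, e1 j hj] at hij
      have := f'.injective (Subtype.ext hij)
      simpa using this
    · rw [e1 i hi, e2 j hj] at hij
      exact absurd (hij ▸ (f' ⟨i, hi⟩).2) (em _).2
    · rw [e1 j hj, e2 i hi] at hij
      exact absurd (hij ▸ (f' ⟨j, hj⟩).2) (em _).2
    · rw [e2 i hi, e2 j hj] at hij
      have := em.injective (Subtype.ext hij)
      omega
  · intro i j hij
    simp only [Function.comp]
    by_cases hj : j < S.card
    · rw [e1 j hj, e1 i (by omega)]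
      exact hmono _ _ hij
    · rw [e2 j hj, hz _ (em _).2]
      exact zero_le
  · intro x hx
    have hx : x ∈ S := by simpa [hS] using hx
    refine ⟨(f'.symm ⟨x, hx⟩ : Fin _), ?_⟩
    rw [e1 _ (f'.symm ⟨x, hx⟩).2]
    simp
  · intro i hi
    rw [e2 i (by omega), hz _ (em _).2]

theorem nth_eq (u : ℤ → NNReal) (e : ℕ → ℤ) (he : Function.Injective e)
    (ha : Antitone (u ∘ e)) (hs : Function.support u ⊆ Set.range e) (i : ℕ) :
    nthLargest u (i+1) = u (e i) := by
  classical
  apply IsGreatest.csSup_eq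
  constructor
  · refine ⟨(Finset.range (i+1)).image e, ?_, ?_⟩
    · rw [Finset.card_image_of_injective _ he, Finset.card_range]
    · intro x hx
      simp only [Finset.mem_image, Finset.mem_range] at hx
      obtain ⟨j, hj, rfl⟩ := hx
      exact ha (by omega : j ≤ i)
  · rintro t ⟨Ω, hc, ht⟩
    obtain ⟨x, hx, hx'⟩ : ∃ x ∈ Ω, x ∉ (Finset.range i).image e := by
      apply Finset.exists_mem_notMem_of_card_lt_card
      rw [Finset.card_image_of_injective _ he, Finset.card_range]; omega
    refine (ht x hx).trans ?_
    by_cases h0 : u x = 0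
    · rw [h0]; exact zero_le
    · obtain ⟨j, rfl⟩ := hs h0
      simp only [Finset.mem_image, Finset.mem_range, not_exists, not_and] at hx'
      have : i ≤ j := by
        by_contra hh
        exact hx' j (by omega) rfl
      exact ha this

theorem sum_enum (φ : ℤ → ENNReal) (e : ℕ → ℤ) (he : Function.Injective e)
    (h : Function.support φ ⊆ Set.range e) : ∑' x, φ x = ∑' i, φ (e i) :=
  (he.tsum_eq h).symm

/-- Core inequality for `F` vanishing on the axes. -/
theorem coreF (w : ℤ → NNReal) (c : ℤ) (hw : ∀ x y : ℤ, |2*x-c| ≤ |2*y-c| → w y ≤ w x)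
    (F : NNReal → NNReal → NNReal) (hF1 : ∀ s, F s 0 = 0) (hF2 : ∀ t, F 0 t = 0)
    (hF : ∀ s s' t t', s' ≤ s → t' ≤ t → F s t' + F s' t ≤ F s t + F s' t')
    (e f : ℕ → ℤ) (σ τ : ℕ ≃ ℤ) (he : Function.Injective e) (hf : Function.Injective f)
    (p q : ℕ → ℤ)
    (hσ : ∀ m, (Finset.range m).image σ = Finset.Ico (p m) (p m + m))
    (hτ : ∀ m, (Finset.range m).image τ = Finset.Ico (q m) (q m + m))
    (hpq : ∀ m n, 0 < m → 0 < n → |2 * p m + m - 2 * q n - n - c| ≤ 1)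
    (a b : ℕ → NNReal) (ha : Antitone a) (hb : Antitone b) (N : ℕ)
    (haN : ∀ i, N ≤ i → a i = 0) (hbN : ∀ i, N ≤ i → b i = 0) :
    ∑' (i : ℕ) (j : ℕ), ((F (a i) (b j) * w (e i - f j) : NNReal) : ENNReal) ≤
      ∑' (i : ℕ) (j : ℕ), ((F (a i) (b j) * w (σ i - τ j) : NNReal) : ENNReal) := by
  classical
  have fin (K : ℕ → ℕ → NNReal) :
      ∑' (i : ℕ) (j : ℕ), ((F (a i) (b j) * K i j : NNReal) : ENNReal) =
      ((∑ i ∈ Finset.range N, ∑ j ∈ Finset.range N, F (a i) (b j) * K i j : NNReal) : ENNReal) := by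
    rw [tsum_eq_sum (s := Finset.range N)]
    · rw [ENNReal.ofNNReal_finsetSum]
      refine Finset.sum_congr rfl fun i _ => ?_
      rw [tsum_eq_sum (s := Finset.range N), ENNReal.ofNNReal_finsetSum]
      intro j hj
      rw [hbN j (by simpa using hj), hF1]; simp
    · intro i hi
      rw [haN i (by simpa using hi)]; simp [hF2]
  rw [fin (fun i j => w (e i - f j)), fin (fun i j => w (σ i - τ j)), ENNReal.coe_le_coe,
    ← NNReal.coe_le_coe]
  push_cast
  apply abel2 N (fun i j => (F (a i) (b j) : ℝ)) (fun i j => (w (e i - f j) : ℝ))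
    (fun i j => (w (σ i - τ j) : ℝ))
  · intro j; simp [haN N le_rfl, hF2]
  · intro j; simp [hbN N le_rfl, hF1]
  · intro i j
    have := hF (a i) (a (i+1)) (b j) (b (j+1)) (ha (Nat.le_succ i)) (hb (Nat.le_succ j))
    exact_mod_cast this
  · intro m n
    have conv (e f : ℕ → ℤ) (he : Function.Injective e) (hf : Function.Injective f) :
      ∑ i ∈ Finset.range (m+1), ∑ j ∈ Finset.range (n+1), (w (e i - f j) : ℝ) =
        ∑ x ∈ (Finset.range (m+1)).image e, ∑ y ∈ (Finset.range (n+1)).image f,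
          (w (x - y) : ℝ) := by
      rw [Finset.sum_image (fun x _ y _ h => he h)]
      refine Finset.sum_congr rfl fun i _ => ?_
      rw [Finset.sum_image (fun x _ y _ h => hf h)]
    rw [conv e f he hf, conv σ τ σ.injective τ.injective, hσ, hτ]
    apply setRiesz (fun z => (w z : ℝ)) c
    · intro x y h; exact_mod_cast hw x y h
    · rw [Finset.card_image_of_injective _ he, Finset.card_range]
    · rw [Finset.card_image_of_injective _ hf, Finset.card_range]
    · exact hpq _ _ (Nat.succ_pos m) (Nat.succ_pos n)

theorem coreG (w : ℤ → NNReal) (c : ℤ) (hw : ∀ x y : ℤ, |2*x-c| ≤ |2*y-c| → w y ≤ w x)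
    (hw0 : ∀ x, w x ≤ w 0)
    (G : NNReal → NNReal → NNReal) (hG : Supermodular G)
    (σ τ : ℕ ≃ ℤ) (p q : ℕ → ℤ)
    (hσ : ∀ m, (Finset.range m).image σ = Finset.Ico (p m) (p m + m))
    (hτ : ∀ m, (Finset.range m).image τ = Finset.Ico (q m) (q m + m))
    (hpq : ∀ m n, 0 < m → 0 < n → |2 * p m + m - 2 * q n - n - c| ≤ 1)
    (u v u' v' : ℤ → NNReal) (hu : (Function.support u).Finite)
    (hv : (Function.support v).Finite)
    (hu' : ∀ i, u' (σ i) = nthLargest u (i+1)) (hv' : ∀ i, v' (τ i) = nthLargest v (i+1)) :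
    ∑' (x : ℤ) (y : ℤ), ((G (u x) (v y) * w (x - y) : NNReal) : ENNReal) ≤
      ∑' (x : ℤ) (y : ℤ), ((G (u' x) (v' y) * w (x - y) : NNReal) : ENNReal) := by
  classical
  obtain ⟨e, N₁, he, hea, hes, heN⟩ := enumExists u hu
  obtain ⟨f, N₂, hf, hfa, hfs, hfN⟩ := enumExists v hv
  simp only [nth_eq u e he hea hes] at hu'
  simp only [nth_eq v f hf hfa hfs] at hv'
  by_cases hw00 : w 0 = 0
  · have : ∀ x, w x = 0 := fun x => le_antisymm ((hw0 x).trans hw00.le) zero_le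
    simp [this]
  by_cases hG00 : G 0 0 = 0
  swap
  · -- the right-hand side is infinite
    have hfu : (Function.support u').Finite := by
      refine ((Finset.range N₁).image σ).finite_toSet.subset ?_
      intro x hx
      simp only [Finset.coe_image, Set.mem_image, Finset.mem_coe, Finset.mem_range]
      refine ⟨σ.symm x, ?_, by simp⟩
      by_contra hh
      apply hx
      have := hu' (σ.symm x)
      rw [heN _ (by omega)] at this
      simpa using this
    have hfv : (Function.support v').Finite := by
      refine ((Finset.range N₂).image τ).finite_toSet.subset ?_
      intro x hx
      simp only [Finset.coe_image, Set.mem_image, Finset.mem_coe, Finset.mem_range]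
      refine ⟨τ.symm x, ?_, by simp⟩
      by_contra hh
      apply hx
      have := hv' (τ.symm x)
      rw [hfN _ (by omega)] at this
      simpa using this
    have hinf := ((hfu.union hfv).infinite_compl).to_subtype
    have htop : ∑' (x : ℤ) (y : ℤ), ((G (u' x) (v' y) * w (x - y) : NNReal) : ENNReal) = ⊤ := by
      rw [eq_top_iff]
      calc (⊤ : ENNReal) = ∑' _ : ((Function.support u' ∪ Function.support v')ᶜ : Set ℤ),
            ((G 0 0 * w 0 : NNReal) : ENNReal) := by
            rw [ENNReal.tsum_const_eq_top_of_ne_zero]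
            simp [hG00, hw00]
        _ ≤ ∑' x : ((Function.support u' ∪ Function.support v')ᶜ : Set ℤ),
            ∑' (y : ℤ), ((G (u' x) (v' y) * w (x - y) : NNReal) : ENNReal) := by
            refine ENNReal.tsum_le_tsum fun x => ?_
            refine le_trans ?_ (ENNReal.le_tsum (x : ℤ))
            have hx := x.2
            simp only [Set.mem_compl_iff, Set.mem_union, Function.mem_support, not_or,
              not_not] at hx
            rw [hx.1, hx.2, sub_self]
        _ ≤ _ := ENNReal.tsum_comp_le_tsum_of_injective Subtype.val_injective _
    rw [htop]; exact le_top
  · have hle : ∀ s t, G s 0 + G 0 t ≤ G s t := by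
      intro s t
      have := hG 0 0 s t
      simpa [hG00] using this
    set F : NNReal → NNReal → NNReal := fun s t => G s t - (G s 0 + G 0 t) with hFdef
    have hGF : ∀ s t, G s t = F s t + G s 0 + G 0 t := by
      intro s t
      rw [add_assoc, hFdef]
      exact (tsub_add_cancel_of_le (hle s t)).symm
    have hF1 : ∀ s, F s 0 = 0 := by intro s; simp [hFdef, hG00]
    have hF2 : ∀ s, F 0 s = 0 := by intro s; simp [hFdef, hG00]
    have hF : ∀ s s' t t', s' ≤ s → t' ≤ t → F s t' + F s' t ≤ F s t + F s' t' := by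
      intro s s' t t' hs ht
      have h := hG s' t' (s - s') (t - t')
      rw [add_tsub_cancel_of_le hs, add_tsub_cancel_of_le ht, hGF s t', hGF s' t, hGF s t,
        hGF s' t'] at h
      rw [← NNReal.coe_le_coe] at h ⊢
      push_cast at h ⊢
      linarith
    have split (u v : ℤ → NNReal) :
        ∑' (x : ℤ) (y : ℤ), ((G (u x) (v y) * w (x - y) : NNReal) : ENNReal) =
        ∑' (x : ℤ) (y : ℤ), ((F (u x) (v y) * w (x - y) : NNReal) : ENNReal) +
        (∑' x, (G (u x) 0 : ENNReal)) * ∑' z, (w z : ENNReal) +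
        (∑' y, (G 0 (v y) : ENNReal)) * ∑' z, (w z : ENNReal) := by
      have h1 : (∑' x, (G (u x) 0 : ENNReal)) * ∑' z, (w z : ENNReal) =
          ∑' (x : ℤ) (y : ℤ), ((G (u x) 0 * w (x - y) : NNReal) : ENNReal) := by
        rw [← ENNReal.tsum_mul_right]
        refine tsum_congr fun x => ?_
        rw [← (Equiv.subLeft x).tsum_eq, ← ENNReal.tsum_mul_left]
        simp
      have h2 : (∑' y, (G 0 (v y) : ENNReal)) * ∑' z, (w z : ENNReal) =
          ∑' (x : ℤ) (y : ℤ), ((G 0 (v y) * w (x - y) : NNReal) : ENNReal) := by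
        rw [ENNReal.tsum_comm, ← ENNReal.tsum_mul_right]
        refine tsum_congr fun y => ?_
        rw [← (Equiv.subRight y).tsum_eq, ← ENNReal.tsum_mul_left]
        simp
      rw [h1, h2, ← ENNReal.tsum_add, ← ENNReal.tsum_add]
      refine tsum_congr fun x => ?_
      rw [← ENNReal.tsum_add, ← ENNReal.tsum_add]
      refine tsum_congr fun y => ?_
      rw [hGF (u x) (v y)]
      push_cast
      ring
    have s1 : ∑' x, (G (u x) 0 : ENNReal) = ∑' x, (G (u' x) 0 : ENNReal) := by
      rw [← σ.tsum_eq (fun x => (G (u' x) 0 : ENNReal)), sum_enum _ e he]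
      · simp only [hu']
      · intro x hx
        apply hes
        intro h0
        simp [h0, hG00] at hx
    have s2 : ∑' x, (G 0 (v x) : ENNReal) = ∑' x, (G 0 (v' x) : ENNReal) := by
      rw [← τ.tsum_eq (fun x => (G 0 (v' x) : ENNReal)), sum_enum _ f hf]
      · simp only [hv']
      · intro x hx
        apply hfs
        intro h0
        simp [h0, hG00] at hx
    rw [split u v, split u' v', s1, s2]
    gcongr ?_ + _ + _
    have l1 : ∑' (x : ℤ) (y : ℤ), ((F (u x) (v y) * w (x - y) : NNReal) : ENNReal) =
        ∑' (i : ℕ) (j : ℕ), ((F (u (e i)) (v (f j)) * w (e i - f j) : NNReal) : ENNReal) := by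
      rw [sum_enum _ e he]
      · refine tsum_congr fun i => ?_
        rw [sum_enum _ f hf]
        intro y hy
        apply hfs
        intro h0
        simp [h0, hF1] at hy
      · intro x hx
        apply hes
        intro h0
        simp [h0, hF2] at hx
    have l2 : ∑' (x : ℤ) (y : ℤ), ((F (u' x) (v' y) * w (x - y) : NNReal) : ENNReal) =
        ∑' (i : ℕ) (j : ℕ), ((F (u (e i)) (v (f j)) * w (σ i - τ j) : NNReal) : ENNReal) := by
      rw [← σ.tsum_eq]
      refine tsum_congr fun i => ?_
      rw [← τ.tsum_eq]
      simp only [hu', hv']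
    rw [l1, l2]
    exact coreF w c hw F hF1 hF2 hF e f σ τ he hf p q hσ hτ hpq (u ∘ e) (v ∘ f) hea hfa
      (max N₁ N₂) (fun i hi => heN i (le_trans (le_max_left _ _) hi))
      (fun i hi => hfN i (le_trans (le_max_right _ _) hi))

/-- spiral 0, 1, -1, 2, -2, … -/
def spInt : ℕ ≃ ℤ where
  toFun i := if i % 2 = 0 then -((i / 2 : ℕ) : ℤ) else ((i / 2 : ℕ) : ℤ) + 1
  invFun x := (if 0 < x then 2 * x - 1 else -2 * x).toNat
  left_inv i := by dsimp only; split_ifs <;> omega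
  right_inv x := by dsimp only; split_ifs <;> omega

/-- spiral 0, -1, 1, -2, 2, … -/
def spHalf : ℕ ≃ ℤ where
  toFun i := if i % 2 = 0 then ((i / 2 : ℕ) : ℤ) else -((i / 2 : ℕ) : ℤ) - 1
  invFun x := (if 0 ≤ x then 2 * x else -2 * x - 1).toNat
  left_inv i := by dsimp only; split_ifs <;> omega
  right_inv x := by dsimp only; split_ifs <;> omega

theorem spInt_image (m : ℕ) : (Finset.range m).image spInt =
    Finset.Ico (-(((m - 1) / 2 : ℕ) : ℤ)) (-(((m - 1) / 2 : ℕ) : ℤ) + m) := by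
  ext x
  simp only [Finset.mem_image, Finset.mem_range, Finset.mem_Ico]
  constructor
  · rintro ⟨i, hi, rfl⟩
    simp only [spInt, Equiv.coe_fn_mk]
    split_ifs <;> omega
  · intro hx
    refine ⟨spInt.symm x, ?_, by simp⟩
    simp only [spInt, Equiv.coe_fn_symm_mk]
    split_ifs <;> omega

theorem spHalf_image (m : ℕ) : (Finset.range m).image spHalf =
    Finset.Ico (-((m / 2 : ℕ) : ℤ)) (-((m / 2 : ℕ) : ℤ) + m) := by
  ext x
  simp only [Finset.mem_image, Finset.mem_range, Finset.mem_Ico]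
  constructor
  · rintro ⟨i, hi, rfl⟩
    simp only [spHalf, Equiv.coe_fn_mk]
    split_ifs <;> omega
  · intro hx
    refine ⟨spHalf.symm x, ?_, by simp⟩
    simp only [spHalf, Equiv.coe_fn_symm_mk]
    split_ifs <;> omega

theorem RZ1_sp (u : ℤ → NNReal) (i : ℕ) : RZ1 u (spInt i) = nthLargest u (i+1) := by
  have : posIdx (2 * spInt i) = i + 1 := by
    simp only [posIdx, spInt, Equiv.coe_fn_mk]
    split_ifs <;> omega
  rw [RZ1, this]

theorem RHalf_sp (u : ℤ → NNReal) (i : ℕ) : RHalf u (spHalf i) = nthLargest u (i+1) := by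
  have : posIdx (2 * spHalf i + 1) = i + 1 := by
    simp only [posIdx, spHalf, Equiv.coe_fn_mk]
    split_ifs <;> omega
  rw [RHalf, this]

/-- One-dimensional discrete Riesz inequality on ℤ, on ℤ+1/2, and in the mixed case. -/
theorem stmt10 (H : NNReal → NNReal) (hH : Antitone H)
    (G : NNReal → NNReal → NNReal) (hG : Supermodular G) :
    (∀ u v : ℤ → NNReal, (Function.support u).Finite → (Function.support v).Finite →
      ∑' (x : ℤ) (y : ℤ), ((G (u x) (v y) * H ((x - y).natAbs) : NNReal) : ENNReal) ≤
      ∑' (x : ℤ) (y : ℤ), ((G (RZ1 u x) (RZ1 v y) * H ((x - y).natAbs) : NNReal) : ENNReal)) ∧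
    (∀ u v : ℤ → NNReal, (Function.support u).Finite → (Function.support v).Finite →
      ∑' (x : ℤ) (y : ℤ), ((G (u x) (v y) * H ((x - y).natAbs) : NNReal) : ENNReal) ≤
      ∑' (x : ℤ) (y : ℤ), ((G (RHalf u x) (RHalf v y) * H ((x - y).natAbs) : NNReal) : ENNReal)) ∧
    (∀ u v : ℤ → NNReal, (Function.support u).Finite → (Function.support v).Finite →
      ∑' (x : ℤ) (y : ℤ),
          ((G (u x) (v y) * H (Real.nnabs ((x : ℝ) - ((y : ℝ) + 1 / 2))) : NNReal) : ENNReal) ≤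
      ∑' (x : ℤ) (y : ℤ),
          ((G (RZ1 u x) (RHalf v y) * H (Real.nnabs ((x : ℝ) - ((y : ℝ) + 1 / 2))) : NNReal) : ENNReal)) := by
  have w1 : ∀ x y : ℤ, |2*x-0| ≤ |2*y-0| → H (y.natAbs) ≤ H (x.natAbs) := by
    intro x y h
    apply hH
    have : x.natAbs ≤ y.natAbs := by simp only [abs_le, le_abs] at h; omega
    exact_mod_cast this
  have w10 : ∀ x : ℤ, H (x.natAbs) ≤ H ((0 : ℤ).natAbs) := by
    intro x
    apply hH
    simp
  refine ⟨fun u v hu hv => ?_, fun u v hu hv => ?_, fun u v hu hv => ?_⟩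
  · refine coreG (fun z => H (z.natAbs)) 0 w1 w10 G hG spInt spInt _ _ spInt_image spInt_image
      ?_ u v _ _ hu hv (RZ1_sp u) (RZ1_sp v)
    intro m n hm hn
    rw [abs_le]; omega
  · refine coreG (fun z => H (z.natAbs)) 0 w1 w10 G hG spHalf spHalf _ _ spHalf_image spHalf_image
      ?_ u v _ _ hu hv (RHalf_sp u) (RHalf_sp v)
    intro m n hm hn
    rw [abs_le]; omega
  · have key : ∀ x y : ℤ, |2*x-1| ≤ |2*y-1| →
        H (Real.nnabs ((y : ℝ) - 1 / 2)) ≤ H (Real.nnabs ((x : ℝ) - 1 / 2)) := by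
      intro x y h
      apply hH
      rw [← NNReal.coe_le_coe]
      simp only [Real.coe_nnabs]
      have h' : |2*(x:ℝ)-1| ≤ |2*(y:ℝ)-1| := by exact_mod_cast h
      have e : ∀ z : ℝ, |z - 1/2| = |2*z-1| / 2 := by
        intro z
        rw [show z - 1/2 = (2*z-1)/2 by ring, abs_div, abs_two]
      rw [e, e]
      linarith
    have := coreG (fun z => H (Real.nnabs ((z : ℝ) - 1 / 2))) 1 key
      (fun x => key 0 x (by simp only [abs_le, le_abs]; omega)) G hG spInt spHalf _ _
      spInt_image spHalf_image
      (by intro m n hm hn; rw [abs_le]; omega) u v _ _ hu hv (RZ1_sp u) (RHalf_sp v)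
    have e : ∀ x y : ℤ, (x : ℝ) - ((y : ℝ) + 1 / 2) = ((x - y : ℤ) : ℝ) - 1 / 2 := by
      intro x y; push_cast; ring
    simp only [e]
    exact this

end
end
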